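/- (Linear accuracy bound.) Let A, Y, W be random variables on a finite probability space with values in finite sets, with A taking values in a finite set 𝒜 with |𝒜| ≥ 2. Let g be a function from the value set of Y into 𝒜, set Acc = 1 − P(g(Y) ≠ A), β = H(A | W) and C = H(Y | W). Then Acc ≤ min{ 1, 1 − (β − C − 1) / log₂ |𝒜| }. -/

import Mathlib

open scoped Classical
open Finset

namespace InfoQA

variable {Ω : Type*} [Fintype Ω]

/-- Probability of an event under a pmf `p` on a finite sample space. -/
noncomputable def pr (p : Ω → ℝ) (S : Ω → Prop) : ℝ :=
  ∑ ω, if S ω then p ω else 0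

/-- Distribution of a random variable `X` under `p`. -/
noncomputable def distOf (p : Ω → ℝ) {α : Type*} (X : Ω → α) (a : α) : ℝ :=
  pr p (fun ω => X ω = a)

/-- Shannon entropy of a random variable (logarithm base 2). -/
noncomputable def H (p : Ω → ℝ) {α : Type*} [Fintype α] (X : Ω → α) : ℝ :=
  -∑ a, distOf p X a * Real.logb 2 (distOf p X a)

/-- Conditional entropy `H(X | Z) = H(X, Z) - H(Z)` (base 2). -/
noncomputable def condH (p : Ω → ℝ) {α β : Type*} [Fintype α] [Fintype β]
    (X : Ω → α) (Z : Ω → β) : ℝ :=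
  H p (fun ω => (X ω, Z ω)) - H p Z

/-- Conditional mutual information `I(X ; Y | Z) = H(X | Z) - H(X | (Y, Z))` (base 2). -/
noncomputable def condMI (p : Ω → ℝ) {α β γ : Type*} [Fintype α] [Fintype β] [Fintype γ]
    (X : Ω → α) (Y : Ω → β) (Z : Ω → γ) : ℝ :=
  condH p X Z - condH p X (fun ω => (Y ω, Z ω))

/-- Binary entropy function (base 2); `Real.logb 2 0 = 0`, so `binEnt 0 = binEnt 1 = 0`. -/
noncomputable def binEnt (x : ℝ) : ℝ :=
  -(x * Real.logb 2 x) - (1 - x) * Real.logb 2 (1 - x)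

end InfoQA

open InfoQA

namespace InfoQA

section Entropy

variable {Ω α β : Type*} [Fintype Ω] {p : Ω → ℝ}

theorem sum_distOf_mul [Fintype α] (p : Ω → ℝ) (X : Ω → α) (f : α → ℝ) :
    ∑ a, distOf p X a * f a = ∑ ω, p ω * f (X ω) := by
  simp only [distOf, pr, Finset.sum_mul, ite_mul, zero_mul]
  rw [Finset.sum_comm]
  simp

theorem sum_distOf [Fintype α] (p : Ω → ℝ) (X : Ω → α) : ∑ a, distOf p X a = ∑ ω, p ω := by
  simpa using sum_distOf_mul p X fun _ => 1

theorem pr_nonneg (hp : ∀ ω, 0 ≤ p ω) (S : Ω → Prop) : 0 ≤ pr p S :=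
  Finset.sum_nonneg fun ω _ => by split_ifs <;> simp [hp ω]

theorem distOf_nonneg (hp : ∀ ω, 0 ≤ p ω) (X : Ω → α) (a : α) : 0 ≤ distOf p X a :=
  pr_nonneg hp _

theorem le_distOf_apply (hp : ∀ ω, 0 ≤ p ω) (X : Ω → α) (ω : Ω) : p ω ≤ distOf p X (X ω) := by
  have h := Finset.single_le_sum (f := fun ω' => if X ω' = X ω then p ω' else 0)
    (fun ω' _ => by split_ifs <;> simp [hp ω']) (Finset.mem_univ ω)
  simpa [distOf, pr] using h

theorem distOf_le_distOf_comp (hp : ∀ ω, 0 ≤ p ω) (X : Ω → α) (f : α → β) (a : α) :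
    distOf p X a ≤ distOf p (fun ω => f (X ω)) (f a) := by
  refine Finset.sum_le_sum fun ω _ => ?_
  by_cases h : X ω = a
  · simp [h]
  · simp only [h, if_false]
    split_ifs <;> simp [hp ω]

theorem H_eq_neg_sum [Fintype α] (p : Ω → ℝ) (X : Ω → α) :
    H p X = -∑ ω, p ω * Real.logb 2 (distOf p X (X ω)) := by
  rw [H, sum_distOf_mul p X fun a => Real.logb 2 (distOf p X a)]

/-- A function of a random variable has at most its entropy. -/
theorem H_comp_le [Fintype α] [Fintype β] (hp : ∀ ω, 0 ≤ p ω) (X : Ω → α) (f : α → β) :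
    H p (fun ω => f (X ω)) ≤ H p X := by
  rw [H_eq_neg_sum, H_eq_neg_sum, neg_le_neg_iff]
  refine Finset.sum_le_sum fun ω _ => ?_
  rcases (hp ω).eq_or_lt with h | h
  · simp [← h]
  · exact mul_le_mul_of_nonneg_left (Real.logb_le_logb_of_le one_lt_two
      (h.trans_le (le_distOf_apply hp X ω)) (distOf_le_distOf_comp hp X f _)) h.le

/-- Gibbs' inequality: cross-entropy relative to a subprobability bounds the entropy. -/
theorem H_le_cross_entropy [Fintype α] (hp : ∀ ω, 0 ≤ p ω) (hsum : ∑ ω, p ω = 1) (X : Ω → α)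
    (q : α → ℝ) (hq : ∀ a, 0 ≤ q a) (hq_sum : ∑ a, q a ≤ 1)
    (hq_pos : ∀ a, 0 < distOf p X a → 0 < q a) :
    H p X ≤ -∑ ω, p ω * Real.logb 2 (q (X ω)) := by
  rw [← sum_distOf_mul p X fun a => Real.logb 2 (q a), H, neg_le_neg_iff]
  have hlog : 0 < Real.log 2 := Real.log_pos one_lt_two
  have key : ∀ a, distOf p X a * Real.log (q a) ≤
      distOf p X a * Real.log (distOf p X a) + (q a - distOf p X a) := by
    intro a
    rcases (distOf_nonneg hp X a).eq_or_lt with h | h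
    · simp [← h, hq a]
    · have hqa := hq_pos a h
      have h1 := Real.log_le_sub_one_of_pos (div_pos hqa h)
      rw [Real.log_div hqa.ne' h.ne'] at h1
      have h2 := mul_le_mul_of_nonneg_left h1 h.le
      rw [mul_sub, mul_sub, mul_div_cancel₀ _ h.ne'] at h2
      linarith
  have hle := Finset.sum_le_sum fun a (_ : a ∈ Finset.univ) => key a
  rw [Finset.sum_add_distrib, Finset.sum_sub_distrib, sum_distOf, hsum] at hle
  simp only [Real.logb, ← mul_div_assoc, ← Finset.sum_div]
  exact div_le_div_of_nonneg_right (by linarith) hlog.le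

end Entropy

/-- A weak form of Fano's inequality, with `1` in place of the binary entropy of the error. -/
theorem condH_le_one_add_error {Ω α β : Type*} [Fintype Ω] [Fintype α] [Fintype β]
    {p : Ω → ℝ} (hp : ∀ ω, 0 ≤ p ω) (hsum : ∑ ω, p ω = 1) (A : Ω → α) (Z : Ω → β) (g : β → α) :
    condH p A Z ≤ 1 + pr p (fun ω => g (Z ω) ≠ A ω) * Real.logb 2 (Fintype.card α : ℝ) := by
  have : Nonempty Ω := by
    by_contra h
    rw [not_nonempty_iff] at h
    simp at hsum
  have : Nonempty α := this.map A
  have hn : (0 : ℝ) < Fintype.card α := by exact_mod_cast Fintype.card_pos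
  set n : ℝ := (Fintype.card α : ℝ) with hn_def
  let r : α → β → ℝ := fun a z => if g z = a then 1 / 2 else 1 / (2 * n)
  have hr : ∀ a z, 0 < r a z := fun a z => by
    dsimp only [r]
    split_ifs <;> positivity
  have hr_sum : ∀ z, ∑ a, r a z ≤ 1 := fun z => by
    calc ∑ a, r a z ≤ ∑ a, ((if g z = a then 1 / 2 else 0) + 1 / (2 * n)) := by
          refine Finset.sum_le_sum fun a _ => ?_
          dsimp only [r]
          have : 0 < 1 / (2 * n) := by positivity
          split_ifs <;> linarith
      _ = 1 := by
          rw [Finset.sum_add_distrib]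
          simp only [Finset.sum_ite_eq, Finset.mem_univ, if_true, Finset.sum_const,
            Finset.card_univ, nsmul_eq_mul, ← hn_def]
          field_simp
          norm_num
  have hr_log : ∀ a z, Real.logb 2 (r a z) = -1 - if g z ≠ a then Real.logb 2 n else 0 := by
    intro a z
    dsimp only [r]
    by_cases h : g z = a
    · simp [h]
    · simp only [h, if_false, ne_eq, not_false_eq_true, if_true, one_div]
      rw [Real.logb_inv, Real.logb_mul two_ne_zero hn.ne', Real.logb_self_eq_one one_lt_two]
      ring
  have hgibbs := H_le_cross_entropy hp hsum (fun ω => (A ω, Z ω))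
    (fun x => distOf p Z x.2 * r x.1 x.2)
    (fun x => mul_nonneg (distOf_nonneg hp _ _) (hr _ _).le)
    (by
      rw [Fintype.sum_prod_type_right]
      simp only [← Finset.mul_sum]
      rw [← hsum, ← sum_distOf p Z]
      exact Finset.sum_le_sum fun z _ =>
        mul_le_of_le_one_right (distOf_nonneg hp _ _) (hr_sum z))
    (fun x hx => mul_pos
      (hx.trans_le (distOf_le_distOf_comp hp (fun ω => (A ω, Z ω)) Prod.snd x)) (hr _ _))
  have hsplit : ∀ ω, p ω * Real.logb 2 (distOf p Z (Z ω) * r (A ω) (Z ω)) =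
      p ω * Real.logb 2 (distOf p Z (Z ω)) - p ω -
        (if g (Z ω) ≠ A ω then p ω else 0) * Real.logb 2 n := by
    intro ω
    rcases (hp ω).eq_or_lt with h | h
    · simp [← h]
    · rw [Real.logb_mul (h.trans_le (le_distOf_apply hp Z ω)).ne' (hr _ _).ne', hr_log]
      split_ifs <;> ring
  simp only [hsplit, Finset.sum_sub_distrib, ← Finset.sum_mul, hsum] at hgibbs
  have herr : pr p (fun ω => g (Z ω) ≠ A ω) = ∑ ω, if g (Z ω) ≠ A ω then p ω else 0 :=
    Finset.sum_congr rfl fun ω _ => by congr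
  rw [condH, H_eq_neg_sum p Z, herr]
  linarith

end InfoQA

/-- Linear accuracy bound: with `Acc = 1 − P_e`, `β = H(A | W)`, `C = H(Y | W)`,
`Acc ≤ min{1, 1 − (β − C − 1) / log₂ |𝒜|}`. -/
theorem linear_accuracy_bound
    {Ω 𝒜 𝒴 𝒲 : Type*} [Fintype Ω] [Fintype 𝒜] [Fintype 𝒴] [Fintype 𝒲]
    (p : Ω → ℝ) (hp : ∀ ω, 0 ≤ p ω) (hsum : ∑ ω, p ω = 1)
    (hcard : 2 ≤ Fintype.card 𝒜)
    (A : Ω → 𝒜) (Y : Ω → 𝒴) (W : Ω → 𝒲) (g : 𝒴 → 𝒜) :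
    1 - pr p (fun ω => g (Y ω) ≠ A ω) ≤
      min 1 (1 - (condH p A W - condH p Y W - 1) / Real.logb 2 (Fintype.card 𝒜 : ℝ)) := by
  have hlog : 0 < Real.logb 2 (Fintype.card 𝒜 : ℝ) :=
    Real.logb_pos one_lt_two (by exact_mod_cast hcard)
  have hfano := condH_le_one_add_error hp hsum A (fun ω => (Y ω, W ω)) fun z => g z.1
  have hmono := H_comp_le hp (fun ω => (A ω, Y ω, W ω)) fun x => (x.1, x.2.2)
  have herr := pr_nonneg hp fun ω => g (Y ω) ≠ A ω
  refine le_min (by linarith) (sub_le_sub_left ?_ 1)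
  rw [div_le_iff₀ hlog]
  simp only [condH] at hfano hmono ⊢
  linarith
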